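/- There is a constant C > 0 depending only on f and D such that for every ν ∈ (0,1] and every t ≥ 0, the solution satisfies ‖u(t)‖₁² ≤ C ν⁻¹. -/

import Mathlib

open MeasureTheory Set
open scoped ENNReal

/-- The `L^p` norm (on the circle, i.e. over one period `(0,1]`) of the `m`-th
derivative of a function `v : ℝ → ℝ` (identified with a function on `S¹ = ℝ/ℤ`). -/
noncomputable def sobLp (m : ℕ) (p : ℝ≥0∞) (v : ℝ → ℝ) : ℝ :=
  (eLpNorm (iteratedDeriv m v) p (volume.restrict (Ioc (0:ℝ) 1))).toReal

/-- `u` is a smooth, space-periodic, zero-mean-value solution of the generalised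
Burgers equation `u_t + f'(u) u_x - ν u_xx = 0` with strongly convex `f` and
nonzero initial condition. -/
structure IsBurgersSolution (f : ℝ → ℝ) (σ ν : ℝ) (u : ℝ → ℝ → ℝ) : Prop where
  hf : ContDiff ℝ (⊤ : ℕ∞) f
  hσ : 0 < σ
  hconv : ∀ y, σ ≤ iteratedDeriv 2 f y
  hν : 0 < ν
  hu : ContDiffOn ℝ (⊤ : ℕ∞) (Function.uncurry u) (Ici (0:ℝ) ×ˢ univ)
  hper : ∀ t x, u t (x + 1) = u t x
  hpde : ∀ t, 0 < t → ∀ x,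
    deriv (fun s => u s x) t + deriv f (u t x) * deriv (u t) x
      - ν * deriv (deriv (u t)) x = 0
  hmean : ∀ t, 0 ≤ t → ∫ x in Ioc (0:ℝ) 1, u t x = 0
  hinit : ∃ x, u 0 x ≠ 0

/-- The quantity `D = max(|u₀|₁⁻¹, |u₀|_{1,∞})`. -/
noncomputable def burgersD (u : ℝ → ℝ → ℝ) : ℝ :=
  max (sobLp 0 1 (u 0))⁻¹ (sobLp 1 ⊤ (u 0))

/-- `T₁ = D⁻² C̃⁻¹ / 4`. -/
noncomputable def burgersT₁ (D Ct : ℝ) : ℝ := (D ^ 2)⁻¹ * Ct⁻¹ / 4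

/-- `T₂ = max(3T₁/2, 2Dσ⁻¹)`. -/
noncomputable def burgersT₂ (σ D Ct : ℝ) : ℝ :=
  max (3 / 2 * burgersT₁ D Ct) (2 * D * σ⁻¹)

/-- Time average over `[T₁, T₂]`. -/
noncomputable def timeAvg (T₁ T₂ : ℝ) (A : ℝ → ℝ) : ℝ :=
  (T₂ - T₁)⁻¹ * ∫ t in T₁..T₂, A t

/-- The structure function `S_p(ℓ)`. -/
noncomputable def structFun (T₁ T₂ : ℝ) (u : ℝ → ℝ → ℝ) (p ℓ : ℝ) : ℝ :=
  timeAvg T₁ T₂ (fun t => ∫ x in Ioc (0:ℝ) 1, |u t (x + ℓ) - u t x| ^ p)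

/-!
Work with the slope `w = u_x` and the total flux `J = f(u) - ν u_x`, for which the equation reads
`u_t + J_x = 0`. Differentiating it gives
`w_t + f'(u) w_x + f''(u) w² = ν w_xx` and `J_t + f'(u) J_x = ν J_xx`,
so the maximum over the circle of each of `w` (by convexity of `f`), `J`, `u` and `-u` is
nonincreasing in time. The bound on `w` reads `u_x ≤ D`, and the bound on `J` reads
`ν u_x ≥ -(osc f + ν D)`, with the oscillation taken over `[-max |u₀|, max |u₀|]`. Since `u_x`
has zero mean and takes values in an interval `[-K, D]` with `K = O(ν⁻¹)`, the Bhatia–Davis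
inequality bounds its mean square by `K D`.
-/

open Filter Topology ProbabilityTheory
open Function (uncurry)

section Calculus

theorem periodic_deriv {v : ℝ → ℝ} {c : ℝ} (hv : Function.Periodic v c) :
    Function.Periodic (deriv v) c := fun x => by
  rw [← deriv_comp_add_const, hv.funext]

theorem deriv_deriv_nonpos_of_isLocalMax {g : ℝ → ℝ} {x : ℝ} (hmax : IsLocalMax g x)
    (hg : ContinuousAt g x) : deriv (deriv g) x ≤ 0 := by
  by_contra! hpos
  have hmin : IsLocalMin g x := isLocalMin_of_deriv_deriv_pos hpos hmax.deriv_eq_zero hg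
  have hconst : g =ᶠ[𝓝 x] fun _ => g x := by
    filter_upwards [hmin, hmax] with y hle hge using le_antisymm hge hle
  have hzero : deriv (deriv g) x = 0 := by
    rw [hconst.deriv.deriv_eq]
    simp
  exact hpos.ne' hzero

theorem nonneg_of_hasDerivAt_of_eventually_le_left {g : ℝ → ℝ} {d t : ℝ} (hg : HasDerivAt g d t)
    (hle : ∀ᶠ s in 𝓝[<] t, g s ≤ g t) : 0 ≤ d := by
  refine ge_of_tendsto (hasDerivAt_iff_tendsto_slope_left_right.1 hg).1 ?_
  filter_upwards [hle, self_mem_nhdsWithin] with s hs hst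
  rw [slope_def_field]
  exact div_nonneg_of_nonpos (sub_nonpos.2 hs) (sub_nonpos.2 (mem_Iio.1 hst).le)

theorem deriv_deriv_nonneg_of_convexOn {f : ℝ → ℝ} (hf : Differentiable ℝ f)
    (hconv : ConvexOn ℝ univ f) (y : ℝ) : 0 ≤ deriv (deriv f) y :=
  (monotoneOn_univ.1 (hconv.monotoneOn_deriv fun x _ => hf x)).deriv_nonneg

end Calculus

section PartialDerivatives

variable {F : Type*} [NormedAddCommGroup F] [NormedSpace ℝ F] {u : ℝ → ℝ → F}

theorem continuousOn_deriv_snd {s : Set ℝ} (hs : UniqueDiffOn ℝ s)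
    (hu : ContDiffOn ℝ 1 (uncurry u) (s ×ˢ univ)) :
    ContinuousOn (uncurry fun t x => deriv (u t) x) (s ×ˢ univ) := by
  have hfderiv := (hu.continuousOn_fderivWithin (hs.prod uniqueDiffOn_univ) le_rfl).clm_apply
    (continuousOn_const (c := ((0 : ℝ), (1 : ℝ))))
  refine hfderiv.congr ?_
  rintro ⟨t, x⟩ htx
  have hline : HasDerivWithinAt (fun y : ℝ => (t, y)) ((0 : ℝ), (1 : ℝ)) univ x :=
    ((hasDerivAt_const x t).prodMk (hasDerivAt_id x)).hasDerivWithinAt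
  have hslice := ((hu.differentiableOn one_ne_zero) (t, x) htx).hasFDerivWithinAt
    |>.comp_hasDerivWithinAt x hline fun y _ => ⟨htx.1, mem_univ y⟩
  exact (hasDerivWithinAt_univ.1 hslice).deriv

theorem hasDerivAt_fst_of_hasFDerivAt {G : ℝ × ℝ → F} {G' : ℝ × ℝ →L[ℝ] F} {t x : ℝ}
    (hG : HasFDerivAt G G' (t, x)) : HasDerivAt (fun s => G (s, x)) (G' (1, 0)) t :=
  hG.comp_hasDerivAt t ((hasDerivAt_id t).prodMk (hasDerivAt_const t x))

theorem hasDerivAt_snd_of_hasFDerivAt {G : ℝ × ℝ → F} {G' : ℝ × ℝ →L[ℝ] F} {t x : ℝ}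
    (hG : HasFDerivAt G G' (t, x)) : HasDerivAt (fun y => G (t, y)) (G' (0, 1)) x :=
  hG.comp_hasDerivAt x ((hasDerivAt_const x t).prodMk (hasDerivAt_id x))

theorem exists_hasDerivAt_mixed {t x : ℝ} (hu : ContDiffAt ℝ 2 (uncurry u) (t, x)) :
    ∃ d, HasDerivAt (fun s => deriv (u s) x) d t ∧
      HasDerivAt (fun y => deriv (fun s => u s y) t) d x := by
  set U := uncurry u
  have hdiff : ∀ᶠ p in 𝓝 (t, x), HasFDerivAt U (fderiv ℝ U p) p := by
    filter_upwards [hu.eventually (by simp)] with p hp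
    exact (hp.differentiableAt two_ne_zero).hasFDerivAt
  have hsnd : HasFDerivAt (fderiv ℝ U) (fderiv ℝ (fderiv ℝ U) (t, x)) (t, x) :=
    ((hu.fderiv_right (m := 1) le_rfl).differentiableAt one_ne_zero).hasFDerivAt
  have happly (v : ℝ × ℝ) : HasFDerivAt (fun p => fderiv ℝ U p v)
      ((ContinuousLinearMap.apply ℝ F v).comp (fderiv ℝ (fderiv ℝ U) (t, x))) (t, x) :=
    (ContinuousLinearMap.apply ℝ F v).hasFDerivAt.comp (t, x) hsnd
  have hsymm : IsSymmSndFDerivAt ℝ U (t, x) := hu.isSymmSndFDerivAt (by simp)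
  refine ⟨fderiv ℝ (fderiv ℝ U) (t, x) (1, 0) (0, 1), ?_, ?_⟩
  · refine (hasDerivAt_fst_of_hasFDerivAt (happly (0, 1))).congr_of_eventuallyEq ?_
    have hline : Tendsto (fun s : ℝ => (s, x)) (𝓝 t) (𝓝 (t, x)) :=
      (Continuous.prodMk_left x).tendsto t
    filter_upwards [hline.eventually hdiff] with s hs
    exact (hasDerivAt_snd_of_hasFDerivAt hs).deriv
  · rw [hsymm.eq]
    refine (hasDerivAt_snd_of_hasFDerivAt (happly (1, 0))).congr_of_eventuallyEq ?_
    have hline : Tendsto (fun y : ℝ => (t, y)) (𝓝 x) (𝓝 (t, x)) :=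
      (Continuous.prodMk_right t).tendsto x
    filter_upwards [hline.eventually hdiff] with y hy
    exact (hasDerivAt_fst_of_hasFDerivAt hy).deriv

end PartialDerivatives

section MaximumPrinciple

theorem le_of_time_deriv_nonpos_at_max {X : Type*} [TopologicalSpace X] {K : Set X}
    (hK : IsCompact K) {v : ℝ → X → ℝ} {M : ℝ} (hv : ContinuousOn (uncurry v) (Ici 0 ×ˢ K))
    (h_init : ∀ x ∈ K, v 0 x ≤ M)
    (h_max : ∀ t, 0 < t → ∀ x ∈ K, IsMaxOn (v t) K x →
      ∃ d ≤ 0, HasDerivAt (fun s => v s x) d t)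
    {t : ℝ} (ht : 0 ≤ t) {x : X} (hx : x ∈ K) : v t x ≤ M := by
  -- Penalizing by `-ε t` makes the time derivative at a spatial maximum strictly negative.
  have h_penalized (ε : ℝ) (hε : 0 < ε) : v t x - ε * t ≤ M := by
    have hcont : ContinuousOn (fun p : ℝ × X => uncurry v p - ε * p.1) (Icc 0 t ×ˢ K) :=
      (hv.mono (prod_mono_left Icc_subset_Ici_self)).sub (by fun_prop)
    obtain ⟨⟨t₀, x₀⟩, ⟨ht₀, hx₀⟩, hmax⟩ :=
      (isCompact_Icc.prod hK).exists_isMaxOn ⟨(t, x), right_mem_Icc.2 ht, hx⟩ hcont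
    have hle (s : ℝ) (hs : s ∈ Icc 0 t) (y : X) (hy : y ∈ K) :
        v s y - ε * s ≤ v t₀ x₀ - ε * t₀ := hmax (mk_mem_prod hs hy)
    obtain rfl | ht₀_pos : 0 = t₀ ∨ 0 < t₀ := ht₀.1.eq_or_lt
    · linarith [hle t (right_mem_Icc.2 ht) x hx, h_init x₀ hx₀]
    · obtain ⟨d, hd_nonpos, hd⟩ := h_max t₀ ht₀_pos x₀ hx₀ fun y hy =>
        (sub_le_sub_iff_right _).1 (hle t₀ ht₀ y hy)
      have hd_sub : HasDerivAt (fun s => v s x₀ - ε * s) (d - ε * 1) t₀ :=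
        hd.sub ((hasDerivAt_id t₀).const_mul ε)
      have hd_nonneg : 0 ≤ d - ε * 1 := by
        refine nonneg_of_hasDerivAt_of_eventually_le_left hd_sub ?_
        filter_upwards [Ioo_mem_nhdsLT ht₀_pos] with s hs
        exact hle s ⟨hs.1.le, hs.2.le.trans ht₀.2⟩ x₀ hx₀
      linarith
  have hlim : Tendsto (fun ε => v t x - ε * t) (𝓝[>] 0) (𝓝 (v t x - 0 * t)) :=
    (Continuous.tendsto (by fun_prop) 0).mono_left nhdsWithin_le_nhds
  simpa using le_of_tendsto hlim (eventually_nhdsWithin_of_forall h_penalized)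

theorem periodic_le_of_time_deriv_nonpos_at_max {v : ℝ → ℝ → ℝ} {c M : ℝ} (hc : 0 < c)
    (hv : ContinuousOn (uncurry v) (Ici 0 ×ˢ univ))
    (hper : ∀ t, 0 ≤ t → Function.Periodic (v t) c) (h_init : ∀ x, v 0 x ≤ M)
    (h_max : ∀ t, 0 < t → ∀ x, (∀ y, v t y ≤ v t x) → ∃ d ≤ 0, HasDerivAt (fun s => v s x) d t)
    {t : ℝ} (ht : 0 ≤ t) (x : ℝ) : v t x ≤ M := by
  have hrepr (s : ℝ) (hs : 0 ≤ s) (y : ℝ) : ∃ z ∈ Icc 0 c, v s y = v s z :=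
    let ⟨z, hz, hyz⟩ := (hper s hs).exists_mem_Ico₀ hc y
    ⟨z, Ico_subset_Icc_self hz, hyz⟩
  obtain ⟨z, hz, hxz⟩ := hrepr t ht x
  rw [hxz]
  refine le_of_time_deriv_nonpos_at_max isCompact_Icc (hv.mono (prod_mono_right (subset_univ _)))
    (fun y _ => h_init y) (fun s hs y _ hmax => h_max s hs y fun y' => ?_) ht hz
  obtain ⟨z', hz', hyz'⟩ := hrepr s hs.le y'
  exact hyz'.trans_le (hmax hz')

end MaximumPrinciple

section UnitPeriod

theorem norm_le_eLpNorm_top_of_mem_Icc {E : Type*} [NormedAddCommGroup E] {g : ℝ → E} {a b x : ℝ}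
    (hab : a ≠ b) (hg : ContinuousOn g (Icc a b)) (hx : x ∈ Icc a b) :
    ‖g x‖ ≤ (eLpNorm g ⊤ (volume.restrict (Ioc a b))).toReal := by
  rw [Measure.restrict_congr_set Ioc_ae_eq_Icc]
  set μ := volume.restrict (Icc a b)
  obtain ⟨B, hB⟩ := isCompact_Icc.exists_bound_of_continuousOn hg
  have hmem : MemLp g ⊤ μ :=
    memLp_top_of_bound (hg.aestronglyMeasurable measurableSet_Icc) B
      (ae_restrict_of_forall_mem measurableSet_Icc hB)
  have hae : (fun y => min ‖g y‖ (eLpNorm g ⊤ μ).toReal) =ᵐ[μ] fun y => ‖g y‖ := by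
    filter_upwards [ae_le_eLpNormEssSup (f := g) (μ := μ)] with y hy
    rw [← eLpNorm_exponent_top] at hy
    simpa using ENNReal.toReal_mono hmem.eLpNorm_ne_top hy
  exact min_eq_left_iff.1 <|
    Measure.eqOn_Icc_of_ae_eq volume hab hae (hg.norm.inf continuousOn_const) hg.norm hx

theorem toReal_eLpNorm_two_sq {α : Type*} [MeasurableSpace α] {μ : Measure α} {g : α → ℝ}
    (hg : AEStronglyMeasurable g μ) : (eLpNorm g 2 μ).toReal ^ 2 = ∫ x, g x ^ 2 ∂μ := by
  rw [toReal_eLpNorm hg, lpNorm_eq_integral_norm_rpow_toReal two_ne_zero ENNReal.ofNat_ne_top hg]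
  have hnonneg : 0 ≤ ∫ x, g x ^ 2 ∂μ := integral_nonneg fun x => sq_nonneg (g x)
  simpa using Real.rpow_inv_natCast_pow hnonneg two_ne_zero

variable {v : ℝ → ℝ}

theorem abs_deriv_le_sobLp_one_top (hv : ContDiff ℝ 1 v) (hper : Function.Periodic v 1) (x : ℝ) :
    |deriv v x| ≤ sobLp 1 ⊤ v := by
  obtain ⟨y, hy, hxy⟩ := (periodic_deriv hper).exists_mem_Ico₀ one_pos x
  rw [hxy, sobLp, iteratedDeriv_one]
  exact norm_le_eLpNorm_top_of_mem_Icc zero_ne_one (hv.continuous_deriv le_rfl).continuousOn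
    (Ico_subset_Icc_self hy)

theorem abs_sub_integral_le_of_abs_deriv_le {L : ℝ} (hv : Differentiable ℝ v)
    (hper : Function.Periodic v 1) (hL : ∀ x, |deriv v x| ≤ L) (x : ℝ) :
    |v x - ∫ y in (0 : ℝ)..1, v y| ≤ L := by
  have hL_nonneg : 0 ≤ L := (abs_nonneg _).trans (hL 0)
  have hosc (y : ℝ) (hy : y ∈ uIoc x (x + 1)) : ‖v x - v y‖ ≤ L := by
    rw [uIoc_of_le (by linarith)] at hy
    have hmv : ‖v x - v y‖ ≤ L * ‖x - y‖ :=
      convex_univ.norm_image_sub_le_of_norm_deriv_le (fun z _ => hv z) (fun z _ => hL z)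
        (mem_univ y) (mem_univ x)
    have hdist : ‖x - y‖ ≤ 1 := abs_le.2 ⟨by linarith [hy.2], by linarith [hy.1]⟩
    exact hmv.trans (mul_le_of_le_one_right hL_nonneg hdist)
  have hmean : ∫ y in x..x + 1, (v x - v y) = v x - ∫ y in (0 : ℝ)..1, v y := by
    rw [intervalIntegral.integral_sub intervalIntegrable_const
      (hv.continuous.intervalIntegrable _ _), hper.intervalIntegral_add_eq x 0]
    simp
  simpa [hmean] using intervalIntegral.norm_integral_le_of_norm_le_const hosc

theorem sobLp_one_two_sq_le_mul (hv : ContDiff ℝ 1 v) (hper : Function.Periodic v 1) {a b : ℝ}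
    (ha : ∀ x, -a ≤ deriv v x) (hb : ∀ x, deriv v x ≤ b) : sobLp 1 2 v ^ 2 ≤ b * a := by
  have hcont : Continuous (deriv v) := hv.continuous_deriv le_rfl
  set μ := volume.restrict (Ioc (0 : ℝ) 1) with hμ
  have : IsProbabilityMeasure μ := ⟨by simp [hμ]⟩
  have hmean : ∫ x, deriv v x ∂μ = 0 := by
    rw [← intervalIntegral.integral_of_le zero_le_one, intervalIntegral.integral_deriv_eq_sub
      (fun x _ => hv.differentiable one_ne_zero x) (hcont.intervalIntegrable 0 1),
      hper.eq, sub_self]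
  calc sobLp 1 2 v ^ 2 = ∫ x, deriv v x ^ 2 ∂μ := by
        rw [sobLp, iteratedDeriv_one, toReal_eLpNorm_two_sq hcont.aestronglyMeasurable]
    _ = Var[deriv v; μ] := (variance_of_integral_eq_zero hcont.aemeasurable hmean).symm
    _ ≤ (b - 0) * (0 - -a) := by
        have := variance_le_sub_mul_sub (.of_forall fun x => ⟨ha x, hb x⟩) hcont.aemeasurable
          (μ := μ)
        rwa [hmean] at this
    _ = b * a := by ring

end UnitPeriod

/-- A classical solution on `[0, ∞) × ℝ`, `1`-periodic in `x`, of the viscous conservation law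
`u_t + f(u)_x = ν u_xx` with positive viscosity `ν` and `C²` flux `f`. Nothing is required
for `t < 0`, and `u` is `C²` up to `t = 0`. -/
structure IsPeriodicViscousSolution (f : ℝ → ℝ) (ν : ℝ) (u : ℝ → ℝ → ℝ) : Prop where
  flux_contDiff : ContDiff ℝ 2 f
  viscosity_pos : 0 < ν
  contDiffOn : ContDiffOn ℝ 2 (uncurry u) (Ici 0 ×ˢ univ)
  periodic : ∀ t, 0 ≤ t → Function.Periodic (u t) 1
  pde : ∀ t, 0 < t → ∀ x,
    deriv (fun s => u s x) t + deriv f (u t x) * deriv (u t) x = ν * deriv (deriv (u t)) x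

namespace IsPeriodicViscousSolution

variable {f : ℝ → ℝ} {ν B D : ℝ} {u : ℝ → ℝ → ℝ} {t : ℝ}

theorem contDiff (h : IsPeriodicViscousSolution f ν u) (ht : 0 ≤ t) : ContDiff ℝ 2 (u t) :=
  contDiffOn_univ.1 <| h.contDiffOn.comp (contDiff_prodMk_right t).contDiffOn
    fun x _ => ⟨ht, mem_univ x⟩

theorem contDiffAt (h : IsPeriodicViscousSolution f ν u) (ht : 0 < t) (x : ℝ) :
    ContDiffAt ℝ 2 (uncurry u) (t, x) :=
  h.contDiffOn.contDiffAt (prod_mem_nhds (Ici_mem_nhds ht) univ_mem)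

theorem hasDerivAt_time (h : IsPeriodicViscousSolution f ν u) (ht : 0 < t) (x : ℝ) :
    HasDerivAt (fun s => u s x) (deriv (fun s => u s x) t) t :=
  (hasDerivAt_fst_of_hasFDerivAt
    ((h.contDiffAt ht x).differentiableAt two_ne_zero).hasFDerivAt).differentiableAt.hasDerivAt

theorem hasDerivAt_space (h : IsPeriodicViscousSolution f ν u) (ht : 0 ≤ t) (x : ℝ) :
    HasDerivAt (u t) (deriv (u t) x) x :=
  ((h.contDiff ht).differentiable two_ne_zero x).hasDerivAt

theorem hasDerivAt_deriv_space (h : IsPeriodicViscousSolution f ν u) (ht : 0 ≤ t) (x : ℝ) :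
    HasDerivAt (deriv (u t)) (deriv (deriv (u t)) x) x :=
  ((h.contDiff ht).differentiable_deriv_two x).hasDerivAt

theorem hasDerivAt_flux (h : IsPeriodicViscousSolution f ν u) (y : ℝ) :
    HasDerivAt f (deriv f y) y :=
  (h.flux_contDiff.differentiable two_ne_zero y).hasDerivAt

theorem hasDerivAt_deriv_flux (h : IsPeriodicViscousSolution f ν u) (y : ℝ) :
    HasDerivAt (deriv f) (deriv (deriv f) y) y :=
  (h.flux_contDiff.differentiable_deriv_two y).hasDerivAt

theorem continuousOn_deriv_space (h : IsPeriodicViscousSolution f ν u) :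
    ContinuousOn (uncurry fun t x => deriv (u t) x) (Ici 0 ×ˢ univ) :=
  continuousOn_deriv_snd (uniqueDiffOn_Ici 0) (h.contDiffOn.of_le one_le_two)

theorem neg (h : IsPeriodicViscousSolution f ν u) :
    IsPeriodicViscousSolution (fun y => -f (-y)) ν (fun t x => -u t x) where
  flux_contDiff := (h.flux_contDiff.comp contDiff_neg).neg
  viscosity_pos := h.viscosity_pos
  contDiffOn := h.contDiffOn.neg
  periodic t ht x := congrArg Neg.neg (h.periodic t ht x)
  pde t ht x := by
    simp only [deriv.fun_neg', deriv_comp_neg, neg_neg]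
    linarith [h.pde t ht x]

theorem le_of_init_le (h : IsPeriodicViscousSolution f ν u) (hB : ∀ x, u 0 x ≤ B) (ht : 0 ≤ t)
    (x : ℝ) : u t x ≤ B := by
  refine periodic_le_of_time_deriv_nonpos_at_max one_pos h.contDiffOn.continuousOn h.periodic hB
    (fun t ht x hmax => ⟨_, ?_, h.hasDerivAt_time ht x⟩) ht x
  have hloc : IsLocalMax (u t) x := .of_forall hmax
  have hxx : deriv (deriv (u t)) x ≤ 0 :=
    deriv_deriv_nonpos_of_isLocalMax hloc (h.contDiff ht.le).continuous.continuousAt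
  have hpde := h.pde t ht x
  rw [hloc.deriv_eq_zero, mul_zero, add_zero] at hpde
  exact hpde.trans_le (mul_nonpos_of_nonneg_of_nonpos h.viscosity_pos.le hxx)

theorem abs_le_of_init_abs_le (h : IsPeriodicViscousSolution f ν u) (hB : ∀ x, |u 0 x| ≤ B)
    (ht : 0 ≤ t) (x : ℝ) : |u t x| ≤ B :=
  abs_le'.2 ⟨h.le_of_init_le (fun x => (abs_le'.1 (hB x)).1) ht x,
    h.neg.le_of_init_le (fun x => (abs_le'.1 (hB x)).2) ht x⟩

theorem deriv_le_of_init_deriv_le (h : IsPeriodicViscousSolution f ν u)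
    (hconv : ConvexOn ℝ univ f) (hD : ∀ x, deriv (u 0) x ≤ D) (ht : 0 ≤ t) (x : ℝ) :
    deriv (u t) x ≤ D := by
  refine periodic_le_of_time_deriv_nonpos_at_max one_pos h.continuousOn_deriv_space
    (fun t ht => periodic_deriv (h.periodic t ht)) hD (fun t ht x hmax => ?_) ht x
  obtain ⟨d, hd_time, hd_space⟩ := exists_hasDerivAt_mixed (h.contDiffAt ht x)
  refine ⟨d, ?_, hd_time⟩
  have hloc : IsLocalMax (deriv (u t)) x := .of_forall hmax
  -- Only `C²` regularity is assumed, so `u_xxx` is obtained by differentiating the equation.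
  have hxxx : HasDerivAt (fun y => ν * deriv (deriv (u t)) y)
      (d + (deriv (deriv f) (u t x) * deriv (u t) x * deriv (u t) x
        + deriv f (u t x) * deriv (deriv (u t)) x)) x := by
    have hsum := hd_space.add (((h.hasDerivAt_deriv_flux (u t x)).comp x
      (h.hasDerivAt_space ht.le x)).mul (h.hasDerivAt_deriv_space ht.le x))
    exact hsum.congr_of_eventuallyEq (.of_forall fun y => (h.pde t ht y).symm)
  have hxxx_nonpos : ν * deriv (deriv (deriv (u t))) x ≤ 0 :=
    mul_nonpos_of_nonneg_of_nonpos h.viscosity_pos.le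
      (deriv_deriv_nonpos_of_isLocalMax hloc
        (h.hasDerivAt_deriv_space ht.le x).continuousAt)
  rw [← deriv_const_mul_field, hxxx.deriv, hloc.deriv_eq_zero] at hxxx_nonpos
  have hquad : 0 ≤ deriv (deriv f) (u t x) * deriv (u t) x * deriv (u t) x := by
    rw [mul_assoc]
    exact mul_nonneg (deriv_deriv_nonneg_of_convexOn
      (h.flux_contDiff.differentiable two_ne_zero) hconv _) (mul_self_nonneg _)
  linarith

theorem flux_sub_le_of_init_le (h : IsPeriodicViscousSolution f ν u) {c : ℝ}
    (hc : ∀ x, f (u 0 x) - ν * deriv (u 0) x ≤ c) (ht : 0 ≤ t) (x : ℝ) :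
    f (u t x) - ν * deriv (u t) x ≤ c := by
  refine periodic_le_of_time_deriv_nonpos_at_max (v := fun t x => f (u t x) - ν * deriv (u t) x)
    one_pos ?_ (fun t ht x => ?_) hc (fun t ht x hmax => ?_) ht x
  · exact (h.flux_contDiff.continuous.comp_continuousOn h.contDiffOn.continuousOn).sub
      (continuousOn_const.mul h.continuousOn_deriv_space)
  · simp only [h.periodic t ht x, periodic_deriv (h.periodic t ht) x]
  obtain ⟨d, hd_time, hd_space⟩ := exists_hasDerivAt_mixed (h.contDiffAt ht x)
  have hspace (y : ℝ) : HasDerivAt (fun y => f (u t y) - ν * deriv (u t) y)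
      (-deriv (fun s => u s y) t) y := by
    have hsub := ((h.hasDerivAt_flux (u t y)).comp y (h.hasDerivAt_space ht.le y)).sub
      ((h.hasDerivAt_deriv_space ht.le y).const_mul ν)
    exact hsub.congr_deriv (by linarith [h.pde t ht y])
  have hloc : IsLocalMax (fun y => f (u t y) - ν * deriv (u t) y) x := .of_forall hmax
  have hut : deriv (fun s => u s x) t = 0 :=
    neg_eq_zero.1 (hloc.hasDerivAt_eq_zero (hspace x))
  have hutx : 0 ≤ d := by
    have hxx := deriv_deriv_nonpos_of_isLocalMax hloc (hspace x).continuousAt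
    rw [funext fun y => (hspace y).deriv, hd_space.fun_neg.deriv] at hxx
    exact neg_nonpos.1 hxx
  refine ⟨_, ?_, ((h.hasDerivAt_flux (u t x)).comp t (h.hasDerivAt_time ht x)).sub
    (hd_time.const_mul ν)⟩
  rw [hut, mul_zero, zero_sub]
  exact neg_nonpos.2 (mul_nonneg h.viscosity_pos.le hutx)

theorem neg_diam_add_le_viscosity_mul_deriv (h : IsPeriodicViscousSolution f ν u)
    (hB : ∀ x, |u 0 x| ≤ B) (hD : ∀ x, |deriv (u 0) x| ≤ D) (ht : 0 ≤ t) (x : ℝ) :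
    -(Metric.diam (f '' Icc (-B) B) + ν * D) ≤ ν * deriv (u t) x := by
  have hbounded : Bornology.IsBounded (f '' Icc (-B) B) :=
    (isCompact_Icc.image h.flux_contDiff.continuous).isBounded
  have hosc (y : ℝ) : f (u 0 y) - f (u t x) ≤ Metric.diam (f '' Icc (-B) B) :=
    (le_abs_self _).trans <| Metric.dist_le_diam_of_mem hbounded
      (mem_image_of_mem f (abs_le.1 (hB y)))
      (mem_image_of_mem f (abs_le.1 (h.abs_le_of_init_abs_le hB ht x)))
  have hslope (y : ℝ) : ν * -D ≤ ν * deriv (u 0) y :=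
    mul_le_mul_of_nonneg_left (abs_le.1 (hD y)).1 h.viscosity_pos.le
  have hflux := h.flux_sub_le_of_init_le
    (c := f (u t x) + (Metric.diam (f '' Icc (-B) B) + ν * D))
    (fun y => by linarith [hosc y, hslope y]) ht x
  linarith

theorem sobLp_one_two_sq_le (h : IsPeriodicViscousSolution f ν u) (hconv : ConvexOn ℝ univ f)
    (hB : ∀ x, |u 0 x| ≤ B) (hD : ∀ x, |deriv (u 0) x| ≤ D) (ht : 0 ≤ t) :
    sobLp 1 2 (u t) ^ 2 ≤ D * (Metric.diam (f '' Icc (-B) B) + ν * D) * ν⁻¹ := by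
  rw [mul_assoc]
  refine sobLp_one_two_sq_le_mul ((h.contDiff ht).of_le one_le_two) (h.periodic t ht) (fun x => ?_)
    (h.deriv_le_of_init_deriv_le hconv (fun x => (abs_le.1 (hD x)).2) ht)
  rw [← neg_mul, ← div_eq_mul_inv, div_le_iff₀' h.viscosity_pos]
  exact h.neg_diam_add_le_viscosity_mul_deriv hB hD ht x

end IsPeriodicViscousSolution

namespace IsBurgersSolution

variable {f : ℝ → ℝ} {σ ν : ℝ} {u : ℝ → ℝ → ℝ}

theorem isPeriodicViscousSolution (h : IsBurgersSolution f σ ν u) :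
    IsPeriodicViscousSolution f ν u where
  flux_contDiff := h.hf.of_le (by norm_cast)
  viscosity_pos := h.hν
  contDiffOn := h.hu.of_le (by norm_cast)
  periodic t _ := h.hper t
  pde t ht x := sub_eq_zero.1 (h.hpde t ht x)

theorem convexOn_flux (h : IsBurgersSolution f σ ν u) : ConvexOn ℝ univ f := by
  have hf := h.isPeriodicViscousSolution.flux_contDiff
  refine convexOn_univ_of_deriv2_nonneg (hf.differentiable two_ne_zero)
    hf.differentiable_deriv_two fun y => ?_
  rw [← iteratedDeriv_eq_iterate]
  exact h.hσ.le.trans (h.hconv y)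

theorem abs_deriv_init_le (h : IsBurgersSolution f σ ν u) (x : ℝ) :
    |deriv (u 0) x| ≤ burgersD u :=
  (abs_deriv_le_sobLp_one_top
    ((h.isPeriodicViscousSolution.contDiff le_rfl).of_le one_le_two) (h.hper 0) x).trans
    (le_max_right _ _)

theorem abs_init_le (h : IsBurgersSolution f σ ν u) (x : ℝ) : |u 0 x| ≤ burgersD u := by
  have hosc := abs_sub_integral_le_of_abs_deriv_le
    ((h.isPeriodicViscousSolution.contDiff le_rfl).differentiable two_ne_zero) (h.hper 0)
    h.abs_deriv_init_le x
  rwa [intervalIntegral.integral_of_le zero_le_one, h.hmean 0 le_rfl, sub_zero] at hosc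

end IsBurgersSolution

theorem statement4_general (f : ℝ → ℝ) (B D ν₀ : ℝ) :
    ∃ C > 0, ∀ ν ≤ ν₀, ∀ u : ℝ → ℝ → ℝ, IsPeriodicViscousSolution f ν u → ConvexOn ℝ univ f →
      (∀ x, |u 0 x| ≤ B) → (∀ x, |deriv (u 0) x| ≤ D) →
        ∀ t, 0 ≤ t → sobLp 1 2 (u t) ^ 2 ≤ C * ν⁻¹ := by
  refine ⟨max (D * (Metric.diam (f '' Icc (-B) B) + ν₀ * D)) 1, by positivity, ?_⟩
  intro ν hν u h hconv hB hD t ht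
  have hD_nonneg : 0 ≤ D := (abs_nonneg _).trans (hD 0)
  have hν_inv : 0 ≤ ν⁻¹ := inv_nonneg.2 h.viscosity_pos.le
  calc sobLp 1 2 (u t) ^ 2 ≤ D * (Metric.diam (f '' Icc (-B) B) + ν * D) * ν⁻¹ :=
        h.sobLp_one_two_sq_le hconv hB hD ht
    _ ≤ D * (Metric.diam (f '' Icc (-B) B) + ν₀ * D) * ν⁻¹ := by gcongr
    _ ≤ max (D * (Metric.diam (f '' Icc (-B) B) + ν₀ * D)) 1 * ν⁻¹ := by
        gcongr
        exact le_max_left _ _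

/-- There is a constant `C > 0` depending only on `f` and `D` such
that for every `ν ∈ (0,1]` and every `t ≥ 0`, `‖u(t)‖₁² ≤ C ν⁻¹`. -/
theorem statement4 (f : ℝ → ℝ) (σ D : ℝ) :
    ∃ C > 0, ∀ ν, 0 < ν → ν ≤ 1 →
      ∀ u : ℝ → ℝ → ℝ, IsBurgersSolution f σ ν u → burgersD u = D →
        ∀ t, 0 ≤ t → sobLp 1 2 (u t) ^ 2 ≤ C * ν⁻¹ :=
  let ⟨C, hC, hbound⟩ := statement4_general f D D 1
  ⟨C, hC, fun ν _ hν u hu hD => hbound ν hν u hu.isPeriodicViscousSolution hu.convexOn_flux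
    (hD ▸ hu.abs_init_le) (hD ▸ hu.abs_deriv_init_le)⟩
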